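/- For |q| < 1: Σ_{n ≥ 0} q^{n^2} (-q;q^2)_n / (q^4;q^4)_n = ((-q;q^2)_∞ / (q^2;q^2)_∞) · (q^3;q^6)_∞^2 (q^6;q^6)_∞. -/

import Mathlib

/-- Finite q-Pochhammer symbol `(x;q)_n = ∏_{k=0}^{n-1} (1 - x q^k)`. -/
noncomputable def qPoch (x q : ℂ) (n : ℕ) : ℂ := ∏ k ∈ Finset.range n, (1 - x * q ^ k)

/-- Infinite q-Pochhammer symbol `(x;q)_∞ = ∏_{k≥0} (1 - x q^k)`. -/
noncomputable def qPochInf (x q : ℂ) : ℂ := ∏' k : ℕ, (1 - x * q ^ k)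

/-! In base `b = q²`, the sequences `β_n = 1/(b²;b²)_n` and `α_r`, the coefficients of the theta
series `∑_{r ∈ ℤ} (-1)^r b^{r²}` folded onto `r ≥ 0`, form a Bailey pair relative to `1`. Bailey's
lemma with one parameter equal to `-q` and the other sent to infinity multiplies `β_n` by
`(-q;q²)_n q^{n²}` and, up to an infinite product independent of `r`, `α_r` by `q^{r²}`, which turns
`α_r` into the coefficients of the same theta series in `q³`. Letting `n → ∞` in the Bailey pair
relation evaluates that series by Gauss's product.

Bailey's lemma is an interchange of summations followed by the `₁φ₁` sum. Writing `F(A, z)` for the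
normalized `₁φ₁` series, that sum follows from the contiguous relation
`F(A, z) = (1 - z) F(Ab, zb)`, whose partial sums telescope, and from `F(0, 0) = 1`. -/

open Filter Topology

section QPochhammer

variable {b : ℂ}

@[simp]
lemma qPoch_zero (x b : ℂ) : qPoch x b 0 = 1 := Finset.prod_range_zero _

lemma qPoch_succ (x b : ℂ) (n : ℕ) : qPoch x b (n + 1) = qPoch x b n * (1 - x * b ^ n) :=
  Finset.prod_range_succ _ n

lemma qPoch_add (x b : ℂ) (m n : ℕ) :
    qPoch x b (m + n) = qPoch x b m * qPoch (x * b ^ m) b n := by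
  simp only [qPoch, Finset.prod_range_add, pow_add, mul_assoc]

lemma qPoch_succ' (x b : ℂ) (n : ℕ) : qPoch x b (n + 1) = (1 - x) * qPoch (x * b) b n := by
  simpa [add_comm, qPoch_succ] using qPoch_add x b 1 n

lemma norm_pow_lt_one (hb : ‖b‖ < 1) {k : ℕ} (hk : k ≠ 0) : ‖b ^ k‖ < 1 := by
  simpa only [norm_pow] using pow_lt_one₀ (norm_nonneg b) hb hk

lemma norm_mul_pow_le (x : ℂ) (hb : ‖b‖ < 1) (k : ℕ) : ‖x * b ^ k‖ ≤ ‖x‖ := by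
  simpa using mul_le_of_le_one_right (norm_nonneg x) (pow_le_one₀ (norm_nonneg b) hb.le)

lemma qPoch_self_ne_zero (hb : ‖b‖ < 1) (n : ℕ) : qPoch b b n ≠ 0 := by
  refine Finset.prod_ne_zero_iff.2 fun k _ h ↦ ?_
  have hlt := norm_pow_lt_one hb k.succ_ne_zero
  rw [← pow_succ', sub_eq_zero] at h
  exact hlt.ne (by rw [← h, norm_one])

lemma hasSum_norm_mul_pow (x : ℂ) (hb : ‖b‖ < 1) :
    HasSum (fun k ↦ ‖-(x * b ^ k)‖) (‖x‖ / (1 - ‖b‖)) := by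
  simpa [div_eq_mul_inv] using (hasSum_geometric_of_lt_one (norm_nonneg b) hb).mul_left ‖x‖

lemma multipliable_one_sub_mul_pow (x : ℂ) (hb : ‖b‖ < 1) :
    Multipliable fun k : ℕ ↦ 1 - x * b ^ k := by
  simpa only [sub_eq_add_neg] using
    multipliable_one_add_of_summable (hasSum_norm_mul_pow x hb).summable

lemma tendsto_qPoch (x : ℂ) (hb : ‖b‖ < 1) :
    Tendsto (qPoch x b) atTop (𝓝 (qPochInf x b)) :=
  (multipliable_one_sub_mul_pow x hb).tendsto_prod_tprod_nat

lemma qPoch_mul_qPochInf (x : ℂ) (hb : ‖b‖ < 1) (n : ℕ) :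
    qPoch x b n * qPochInf (x * b ^ n) b = qPochInf x b := by
  have shift : ∀ k, 1 - x * b ^ n * b ^ k = 1 - x * b ^ (k + n) := fun k ↦ by ring
  have htail := multipliable_one_sub_mul_pow (x * b ^ n) hb
  simp only [qPochInf, shift] at htail ⊢
  exact Multipliable.prod_mul_tprod_nat_mul' (f := fun k ↦ 1 - x * b ^ k) htail

lemma qPochInf_eq_one_sub_mul (x : ℂ) (hb : ‖b‖ < 1) :
    qPochInf x b = (1 - x) * qPochInf (x * b) b := by
  simpa [qPoch_succ] using (qPoch_mul_qPochInf x hb 1).symm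

lemma qPochInf_ne_zero {x : ℂ} (hb : ‖b‖ < 1) (hx : ∀ n, qPoch x b n ≠ 0) :
    qPochInf x b ≠ 0 := by
  have hfactor : ∀ k, 1 + -(x * b ^ k) ≠ 0 := fun k ↦ by
    have h := hx (k + 1)
    rw [qPoch_succ, sub_eq_add_neg] at h
    exact right_ne_zero_of_mul h
  simpa only [qPochInf, sub_eq_add_neg] using
    tprod_one_add_ne_zero_of_summable hfactor (hasSum_norm_mul_pow x hb).summable

lemma qPochInf_sq_mul_qPochInf_sq (x : ℂ) (hb : ‖b‖ < 1) :
    qPochInf x (b ^ 2) * qPochInf (x * b) (b ^ 2) = qPochInf x b := by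
  have hb2 := norm_pow_lt_one hb two_ne_zero
  have even : ∀ k, 1 - x * (b ^ 2) ^ k = 1 - x * b ^ (2 * k) := fun k ↦ by ring
  have odd : ∀ k, 1 - x * b * (b ^ 2) ^ k = 1 - x * b ^ (2 * k + 1) := fun k ↦ by ring
  have heven := multipliable_one_sub_mul_pow x hb2
  have hodd := multipliable_one_sub_mul_pow (x * b) hb2
  simp only [qPochInf, even, odd] at heven hodd ⊢
  exact tprod_even_mul_odd (f := fun k ↦ 1 - x * b ^ k) heven hodd

lemma norm_qPoch_sub_one_le (x : ℂ) (hb : ‖b‖ < 1) (n : ℕ) :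
    ‖qPoch x b n - 1‖ ≤ Real.exp (‖x‖ / (1 - ‖b‖)) - 1 := by
  have hsum := hasSum_norm_mul_pow x hb
  calc ‖qPoch x b n - 1‖
      ≤ Real.exp (∑ k ∈ Finset.range n, ‖-(x * b ^ k)‖) - 1 := by
        simpa only [qPoch, sub_eq_add_neg] using
          (Finset.range n).norm_prod_one_add_sub_one_le fun k ↦ -(x * b ^ k)
    _ ≤ Real.exp (‖x‖ / (1 - ‖b‖)) - 1 := by
        gcongr
        exact sum_le_hasSum _ (fun _ _ ↦ norm_nonneg _) hsum

lemma norm_qPochInf_sub_one_le (x : ℂ) (hb : ‖b‖ < 1) :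
    ‖qPochInf x b - 1‖ ≤ Real.exp (‖x‖ / (1 - ‖b‖)) - 1 :=
  le_of_tendsto ((tendsto_qPoch x hb).sub_const 1).norm
    (Eventually.of_forall (norm_qPoch_sub_one_le x hb))

lemma norm_qPoch_le (x : ℂ) (hb : ‖b‖ < 1) (n : ℕ) :
    ‖qPoch x b n‖ ≤ Real.exp (‖x‖ / (1 - ‖b‖)) := by
  have h := norm_sub_norm_le (qPoch x b n) 1
  rw [norm_one] at h
  linarith [norm_qPoch_sub_one_le x hb n]

lemma norm_qPochInf_le (x : ℂ) (hb : ‖b‖ < 1) :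
    ‖qPochInf x b‖ ≤ Real.exp (‖x‖ / (1 - ‖b‖)) :=
  le_of_tendsto (tendsto_qPoch x hb).norm (Eventually.of_forall (norm_qPoch_le x hb))

lemma exists_norm_inv_qPoch_le {x : ℂ} (hb : ‖b‖ < 1) (hx : ∀ n, qPoch x b n ≠ 0) :
    ∃ C, ∀ n, ‖(qPoch x b n)⁻¹‖ ≤ C := by
  obtain ⟨C, hC⟩ := ((tendsto_qPoch x hb).inv₀ (qPochInf_ne_zero hb hx)).norm.bddAbove_range
  exact ⟨C, fun n ↦ hC ⟨n, rfl⟩⟩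

lemma tendsto_qPochInf_nhds_zero (hb : ‖b‖ < 1) :
    Tendsto (fun x ↦ qPochInf x b) (𝓝 0) (𝓝 1) := by
  rw [tendsto_iff_norm_sub_tendsto_zero]
  refine squeeze_zero (fun _ ↦ norm_nonneg _) (fun x ↦ norm_qPochInf_sub_one_le x hb) ?_
  have hcont : Continuous fun x : ℂ ↦ Real.exp (‖x‖ / (1 - ‖b‖)) - 1 := by fun_prop
  simpa using hcont.tendsto 0

end QPochhammer

section QWeight

variable {b : ℂ}

/-- The weight `(-x)^n b^{n(n-1)/2}`, which is the limit of `(ρ;b)_n (x/ρ)^n` as `ρ → ∞`. It is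
encoded as a product so that it obeys the same recursions as `qPoch`. -/
noncomputable def qWeight (x b : ℂ) (n : ℕ) : ℂ := ∏ k ∈ Finset.range n, -(x * b ^ k)

@[simp]
lemma qWeight_zero (x b : ℂ) : qWeight x b 0 = 1 := Finset.prod_range_zero _

lemma qWeight_succ (x b : ℂ) (n : ℕ) : qWeight x b (n + 1) = qWeight x b n * -(x * b ^ n) :=
  Finset.prod_range_succ _ n

lemma qWeight_add (x b : ℂ) (m n : ℕ) :
    qWeight x b (m + n) = qWeight x b m * qWeight (x * b ^ m) b n := by
  simp only [qWeight, Finset.prod_range_add, pow_add, mul_assoc]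

lemma qWeight_succ' (x b : ℂ) (n : ℕ) : qWeight x b (n + 1) = -x * qWeight (x * b) b n := by
  simpa [add_comm, qWeight_succ] using qWeight_add x b 1 n

lemma qWeight_neg_sq (q : ℂ) (n : ℕ) : qWeight (-q) (q ^ 2) n = q ^ n ^ 2 := by
  induction n with
  | zero => simp
  | succ n ih =>
    rw [qWeight_succ, ih]
    ring

lemma norm_qWeight_le_of_norm_le {x y : ℂ} (b : ℂ) (hxy : ‖x‖ ≤ ‖y‖) (n : ℕ) :
    ‖qWeight x b n‖ ≤ ‖qWeight y b n‖ := by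
  simp only [qWeight, norm_prod, norm_neg, norm_mul]
  gcongr

lemma summable_norm_qWeight (x : ℂ) (hb : ‖b‖ < 1) : Summable fun n ↦ ‖qWeight x b n‖ := by
  have hratio : Tendsto (fun n : ℕ ↦ ‖-(x * b ^ n)‖) atTop (𝓝 0) :=
    (hasSum_norm_mul_pow x hb).summable.tendsto_atTop_zero
  have hhalf : ∀ᶠ n in atTop, ‖qWeight x b (n + 1)‖ ≤ 1 / 2 * ‖qWeight x b n‖ := by
    filter_upwards [hratio.eventually_le_const one_half_pos] with n hn
    rw [qWeight_succ, norm_mul, mul_comm]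
    exact mul_le_mul_of_nonneg_right hn (norm_nonneg _)
  exact (summable_of_ratio_norm_eventually_le one_half_lt_one hhalf).norm

lemma tendsto_qWeight_nhds_zero (b : ℂ) (n : ℕ) :
    Tendsto (fun x ↦ qWeight x b n) (𝓝 0) (𝓝 (if n = 0 then 1 else 0)) := by
  have hcont : Continuous fun x ↦ qWeight x b n := by unfold qWeight; fun_prop
  cases n with
  | zero => simp
  | succ n => simpa [qWeight_succ'] using hcont.tendsto 0

end QWeight

section OnePhiOne

variable {b : ℂ}

/-- The `m`-th term of the basic hypergeometric series `₁φ₁(A; Az; b, z)`, multiplied by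
`(Az;b)_∞`. The factor turns the denominators `(Az;b)_m` into numerators `(Azb^m;b)_∞`, so that no
restriction on `A` and `z` is needed. -/
noncomputable def onePhiOneTerm (A z b : ℂ) (m : ℕ) : ℂ :=
  qPoch A b m * qWeight z b m / qPoch b b m * qPochInf (A * z * b ^ m) b

lemma exists_norm_onePhiOneTerm_le (A z : ℂ) (hb : ‖b‖ < 1) :
    ∃ C, ∀ A' z', ‖A'‖ ≤ ‖A‖ → ‖z'‖ ≤ ‖z‖ →
      ∀ m, ‖onePhiOneTerm A' z' b m‖ ≤ C * ‖qWeight z b m‖ := by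
  obtain ⟨C, hC⟩ := exists_norm_inv_qPoch_le hb (qPoch_self_ne_zero hb)
  refine ⟨Real.exp (‖A‖ / (1 - ‖b‖)) * C * Real.exp (‖A‖ * ‖z‖ / (1 - ‖b‖)),
    fun A' z' hA hz m ↦ ?_⟩
  have : 0 ≤ 1 - ‖b‖ := by linarith
  have hfin : ‖qPoch A' b m‖ ≤ Real.exp (‖A‖ / (1 - ‖b‖)) :=
    (norm_qPoch_le A' hb m).trans (by gcongr)
  have hinf : ‖qPochInf (A' * z' * b ^ m) b‖ ≤ Real.exp (‖A‖ * ‖z‖ / (1 - ‖b‖)) := by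
    refine (norm_qPochInf_le _ hb).trans ?_
    gcongr
    calc ‖A' * z' * b ^ m‖ ≤ ‖A' * z'‖ := norm_mul_pow_le _ hb m
      _ = ‖A'‖ * ‖z'‖ := norm_mul _ _
      _ ≤ ‖A‖ * ‖z‖ := by gcongr
  calc ‖onePhiOneTerm A' z' b m‖
      = ‖qPoch A' b m‖ * ‖qWeight z' b m‖ * ‖(qPoch b b m)⁻¹‖
          * ‖qPochInf (A' * z' * b ^ m) b‖ := by
        simp only [onePhiOneTerm, div_eq_mul_inv, norm_mul]
    _ ≤ Real.exp (‖A‖ / (1 - ‖b‖)) * ‖qWeight z b m‖ * C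
          * Real.exp (‖A‖ * ‖z‖ / (1 - ‖b‖)) := by
        have hC0 : 0 ≤ C := (norm_nonneg _).trans (hC m)
        gcongr
        exacts [norm_qWeight_le_of_norm_le b hz m, hC m]
    _ = _ := by ring

lemma summable_onePhiOneTerm (A z : ℂ) (hb : ‖b‖ < 1) : Summable (onePhiOneTerm A z b) := by
  obtain ⟨C, hC⟩ := exists_norm_onePhiOneTerm_le A z hb
  exact .of_norm_bounded ((summable_norm_qWeight z hb).mul_left C) (hC A z le_rfl le_rfl)

lemma sum_range_onePhiOneTerm_sub (A z : ℂ) (hb : ‖b‖ < 1) (M : ℕ) :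
    ∑ m ∈ Finset.range (M + 1),
        (onePhiOneTerm A z b m - (1 - z) * onePhiOneTerm (A * b) (z * b) b m)
      = z * (1 - A - A * (1 - A * z) * b ^ (M + 1)) * onePhiOneTerm (A * b) (z * b) b M := by
  have shift (k : ℕ) : qPochInf (A * z * b ^ k) b
      = (1 - A * z * b ^ k) * qPochInf (A * z * b ^ (k + 1)) b := by
    rw [qPochInf_eq_one_sub_mul _ hb, mul_assoc (A * z), ← pow_succ]
  have shift' (k : ℕ) : A * b * (z * b) * b ^ k = A * z * b ^ (k + 2) := by ring
  induction M with
  | zero =>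
    simp only [zero_add, Finset.sum_range_one, onePhiOneTerm, shift', shift 0, shift 1, qPoch_zero,
      qWeight_zero]
    ring
  | succ M ih =>
    have hM := qPoch_self_ne_zero hb M
    have hM' := right_ne_zero_of_mul (qPoch_succ b b M ▸ qPoch_self_ne_zero hb (M + 1))
    rw [Finset.sum_range_succ, ih]
    simp only [onePhiOneTerm, shift', shift (M + 1), shift (M + 2), qPoch_succ' A, qPoch_succ b b,
      qPoch_succ (A * b), qWeight_succ' z, qWeight_succ (z * b)]
    field_simp
    ring

lemma tsum_onePhiOneTerm_eq_one_sub_mul (A z : ℂ) (hb : ‖b‖ < 1) :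
    ∑' m, onePhiOneTerm A z b m = (1 - z) * ∑' m, onePhiOneTerm (A * b) (z * b) b m := by
  have hs := summable_onePhiOneTerm A z hb
  have hs' := summable_onePhiOneTerm (A * b) (z * b) hb
  have hpow : Tendsto (fun M : ℕ ↦ b ^ (M + 1)) atTop (𝓝 0) :=
    (tendsto_pow_atTop_nhds_zero_of_norm_lt_one hb).comp (tendsto_add_atTop_nat 1)
  have hremainder := (((hpow.const_mul (A * (1 - A * z))).const_sub (1 - A)).const_mul z).mul
    hs'.tendsto_atTop_zero
  have hpartial := (hs.hasSum.sub (hs'.hasSum.mul_left (1 - z))).tendsto_sum_nat.comp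
    (tendsto_add_atTop_nat 1)
  simp only [Function.comp_def, sum_range_onePhiOneTerm_sub A z hb] at hpartial
  rw [mul_zero] at hremainder
  exact sub_eq_zero.1 (tendsto_nhds_unique hpartial hremainder)

lemma tsum_onePhiOneTerm_eq_qPoch_mul (A z : ℂ) (hb : ‖b‖ < 1) (k : ℕ) :
    ∑' m, onePhiOneTerm A z b m
      = qPoch z b k * ∑' m, onePhiOneTerm (A * b ^ k) (z * b ^ k) b m := by
  induction k with
  | zero => simp
  | succ k ih =>
    rw [ih, tsum_onePhiOneTerm_eq_one_sub_mul _ _ hb, qPoch_succ, pow_succ]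
    simp only [mul_assoc]

lemma tendsto_tsum_onePhiOneTerm_mul_pow (A z : ℂ) (hb : ‖b‖ < 1) :
    Tendsto (fun k : ℕ ↦ ∑' m, onePhiOneTerm (A * b ^ k) (z * b ^ k) b m) atTop (𝓝 1) := by
  have hpow := tendsto_pow_atTop_nhds_zero_of_norm_lt_one hb
  have hA : Tendsto (fun k : ℕ ↦ A * b ^ k) atTop (𝓝 0) := by simpa using hpow.const_mul A
  have hz : Tendsto (fun k : ℕ ↦ z * b ^ k) atTop (𝓝 0) := by simpa using hpow.const_mul z
  obtain ⟨C, hC⟩ := exists_norm_onePhiOneTerm_le A z hb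
  rw [← tsum_ite_eq 0 fun _ : ℕ ↦ (1 : ℂ)]
  refine tendsto_tsum_of_dominated_convergence ((summable_norm_qWeight z hb).mul_left C)
    (fun m ↦ ?_) (.of_forall fun k ↦ hC _ _ (norm_mul_pow_le A hb k) (norm_mul_pow_le z hb k))
  have hfin : Tendsto (fun x ↦ qPoch x b m) (𝓝 0) (𝓝 1) := by
    have hcont : Continuous fun x ↦ qPoch x b m := by unfold qPoch; fun_prop
    simpa [qPoch] using hcont.tendsto 0
  have harg : Tendsto (fun k : ℕ ↦ A * b ^ k * (z * b ^ k) * b ^ m) atTop (𝓝 0) := by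
    simpa using (hA.mul hz).mul_const (b ^ m)
  have hlim := (((hfin.comp hA).mul ((tendsto_qWeight_nhds_zero b m).comp hz)).div_const
    (qPoch b b m)).mul ((tendsto_qPochInf_nhds_zero hb).comp harg)
  have hvalue : 1 * (if m = 0 then 1 else 0) / qPoch b b m * 1 = if m = 0 then 1 else 0 := by
    split_ifs with hm <;> simp [hm]
  exact hvalue ▸ hlim

theorem tsum_onePhiOneTerm (A z : ℂ) (hb : ‖b‖ < 1) :
    ∑' m, onePhiOneTerm A z b m = qPochInf z b := by
  have hlim := (tendsto_qPoch z hb).mul (tendsto_tsum_onePhiOneTerm_mul_pow A z hb)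
  simp only [← tsum_onePhiOneTerm_eq_qPoch_mul A z hb, mul_one] at hlim
  exact tendsto_nhds_unique tendsto_const_nhds hlim

end OnePhiOne

lemma tsum_sum_antidiagonal {A E : Type*} [AddMonoid A] [Finset.HasAntidiagonal A]
    [AddCommMonoid E] [TopologicalSpace E] [ContinuousAdd E] [T3Space E] {f : A × A → E}
    (hf : Summable f) :
    ∑' n, ∑ p ∈ Finset.HasAntidiagonal.antidiagonal n, f p = ∑' p, f p := by
  have hsigma := Finset.HasAntidiagonal.sigmaAntidiagonalEquivProd.hasSum_iff.2 hf.hasSum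
  refine HasSum.tsum_eq (hsigma.sigma fun n ↦ ?_)
  rw [← Finset.sum_coe_sort]
  exact hasSum_fintype _

/-- `(α, β)` is a Bailey pair relative to `a` in base `b`. -/
def IsBaileyPair (a b : ℂ) (α β : ℕ → ℂ) : Prop :=
  ∀ n, β n = ∑ r ∈ Finset.range (n + 1), α r / (qPoch b b (n - r) * qPoch (a * b) b (n + r))

namespace IsBaileyPair

variable {a b ρ σ : ℂ} {α β : ℕ → ℂ}

lemma tendsto (hb : ‖b‖ < 1) (h : IsBaileyPair a b α β) (hab : ∀ n, qPoch (a * b) b n ≠ 0)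
    (hα : Summable α) :
    Tendsto β atTop (𝓝 ((∑' r, α r) / (qPochInf b b * qPochInf (a * b) b))) := by
  have hbb := qPoch_self_ne_zero hb
  obtain ⟨C, hC⟩ := exists_norm_inv_qPoch_le hb hbb
  obtain ⟨D, hD⟩ := exists_norm_inv_qPoch_le hb hab
  have hC0 : 0 ≤ C := (norm_nonneg _).trans (hC 0)
  have hD0 : 0 ≤ D := (norm_nonneg _).trans (hD 0)
  let F (n r : ℕ) : ℂ := if r ∈ Finset.range (n + 1) then
    α r / (qPoch b b (n - r) * qPoch (a * b) b (n + r)) else 0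
  have hβ : β = fun n ↦ ∑' r, F n r := by
    funext n
    rw [h n, tsum_eq_sum fun r hr ↦ if_neg hr]
    exact Finset.sum_congr rfl fun r hr ↦ (if_pos hr).symm
  rw [hβ, ← tsum_div_const]
  refine tendsto_tsum_of_dominated_convergence (hα.norm.mul_right (C * D))
    (fun r ↦ ?_) (.of_forall fun n r ↦ ?_)
  · have hlim := (((tendsto_qPoch b hb).comp (tendsto_sub_atTop_nat r)).mul
      ((tendsto_qPoch (a * b) hb).comp (tendsto_add_atTop_nat r))).inv₀
      (mul_ne_zero (qPochInf_ne_zero hb hbb) (qPochInf_ne_zero hb hab))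
    refine (hlim.const_mul (α r)).congr' ?_
    filter_upwards [eventually_ge_atTop r] with n hn
    exact (if_pos (Finset.mem_range_succ_iff.2 hn)).symm
  · dsimp only [F]
    split_ifs
    · rw [div_eq_mul_inv, mul_inv, norm_mul, norm_mul]
      gcongr
      exacts [hC _, hD _]
    · rw [norm_zero]
      positivity

lemma sum_antidiagonal_eq (hb : ‖b‖ < 1) (h : IsBaileyPair a b α β) (hρσ : ρ * σ = a * b)
    (hab : ∀ n, qPoch (a * b) b n ≠ 0) (n : ℕ) :
    ∑ p ∈ Finset.HasAntidiagonal.antidiagonal n, qPoch ρ b p.1 * (qWeight σ b p.1 * α p.1)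
        * onePhiOneTerm (ρ * b ^ p.1) (σ * b ^ p.1) b p.2
      = qPochInf (a * b) b * (qPoch ρ b n * qWeight σ b n * β n) := by
  rw [h n, Finset.Nat.sum_antidiagonal_eq_sum_range_succ_mk, Finset.mul_sum, Finset.mul_sum]
  refine Finset.sum_congr rfl fun r hr ↦ ?_
  obtain ⟨m, rfl⟩ := Nat.exists_eq_add_of_le (Finset.mem_range_succ_iff.1 hr)
  have hm := qPoch_self_ne_zero hb m
  have hrm := hab (r + m + r)
  have harg : ρ * b ^ r * (σ * b ^ r) * b ^ m = a * b * b ^ (r + m + r) := by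
    rw [← hρσ]
    ring
  simp only [onePhiOneTerm, harg, Nat.add_sub_cancel_left, qPoch_add ρ, qWeight_add σ,
    ← qPoch_mul_qPochInf (a * b) hb (r + m + r)]
  field_simp

lemma summable_mul_onePhiOneTerm (hb : ‖b‖ < 1) (hα : Summable fun r ↦ qWeight σ b r * α r) :
    Summable fun p : ℕ × ℕ ↦ qPoch ρ b p.1 * (qWeight σ b p.1 * α p.1)
      * onePhiOneTerm (ρ * b ^ p.1) (σ * b ^ p.1) b p.2 := by
  obtain ⟨C, hC⟩ := exists_norm_onePhiOneTerm_le ρ σ hb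
  have hbound := (hα.norm.mul_left (Real.exp (‖ρ‖ / (1 - ‖b‖)))).mul_of_nonneg
    ((summable_norm_qWeight σ hb).mul_left C) (fun _ ↦ by positivity)
    (fun m ↦ (norm_nonneg _).trans (hC ρ σ le_rfl le_rfl m))
  refine .of_norm_bounded hbound fun p ↦ ?_
  rw [norm_mul, norm_mul (qPoch ρ b p.1)]
  gcongr
  exacts [norm_qPoch_le ρ hb p.1,
    hC _ _ (norm_mul_pow_le ρ hb p.1) (norm_mul_pow_le σ hb p.1) p.2]

/-- Bailey's lemma with one of its two parameters sent to infinity. The usual quotient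
`(ρ;b)_r (ab/ρ;b)_∞ / (ab/ρ;b)_r` appears as `(ρ;b)_r (σb^r;b)_∞` with `σ = ab/ρ`. -/
theorem tsum_eq (hb : ‖b‖ < 1) (h : IsBaileyPair a b α β) (hρσ : ρ * σ = a * b)
    (hab : ∀ n, qPoch (a * b) b n ≠ 0) (hα : Summable fun r ↦ qWeight σ b r * α r) :
    ∑' n, qPoch ρ b n * qWeight σ b n * β n
      = (∑' r, qPoch ρ b r * qPochInf (σ * b ^ r) b * (qWeight σ b r * α r))
          / qPochInf (a * b) b := by
  have hsum := summable_mul_onePhiOneTerm (ρ := ρ) hb hα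
  rw [eq_div_iff (qPochInf_ne_zero hb hab), mul_comm, ← tsum_mul_left]
  calc ∑' n, qPochInf (a * b) b * (qPoch ρ b n * qWeight σ b n * β n)
      = ∑' p : ℕ × ℕ, qPoch ρ b p.1 * (qWeight σ b p.1 * α p.1)
          * onePhiOneTerm (ρ * b ^ p.1) (σ * b ^ p.1) b p.2 := by
        simp only [← h.sum_antidiagonal_eq hb hρσ hab, tsum_sum_antidiagonal hsum]
    _ = ∑' r, ∑' m, qPoch ρ b r * (qWeight σ b r * α r)
          * onePhiOneTerm (ρ * b ^ r) (σ * b ^ r) b m := hsum.tsum_prod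
    _ = ∑' r, qPoch ρ b r * qPochInf (σ * b ^ r) b * (qWeight σ b r * α r) := by
        simp only [tsum_mul_left, tsum_onePhiOneTerm _ _ hb, mul_right_comm]

end IsBaileyPair

section Theta

variable {b : ℂ}

/-- The coefficients of the theta series `∑_{r ∈ ℤ} (-1)^r b^{r^2}` after the terms for `r` and
`-r` have been combined. -/
noncomputable def thetaCoeff (b : ℂ) (r : ℕ) : ℂ := if r = 0 then 1 else 2 * (-1) ^ r * b ^ r ^ 2

lemma summable_thetaCoeff (hb : ‖b‖ < 1) : Summable (thetaCoeff b) := by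
  refine .of_norm_bounded ((summable_geometric_of_lt_one (norm_nonneg b) hb).mul_left 2) fun r ↦ ?_
  rcases eq_or_ne r 0 with rfl | hr
  · simp [thetaCoeff]
  · simpa [thetaCoeff, hr] using
      pow_le_pow_of_le_one (norm_nonneg b) hb.le (Nat.le_self_pow two_ne_zero r)

lemma pow_sq_mul_thetaCoeff_pow (b : ℂ) (k r : ℕ) :
    b ^ r ^ 2 * thetaCoeff (b ^ k) r = thetaCoeff (b ^ (k + 1)) r := by
  rcases eq_or_ne r 0 with rfl | hr
  · simp [thetaCoeff]
  · simp only [thetaCoeff, hr, if_false]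
    ring

lemma thetaCoeff_add_two (b : ℂ) (r : ℕ) :
    thetaCoeff b (r + 2) = -thetaCoeff b (r + 1) * b ^ (2 * r + 3) := by
  simp only [thetaCoeff, Nat.add_eq_zero_iff, OfNat.ofNat_ne_zero, one_ne_zero, and_false, if_false]
  ring

lemma sum_range_thetaCoeff_sub (hb : ‖b‖ < 1) (R j : ℕ) :
    ∑ r ∈ Finset.range (R + 1),
        ((1 - b ^ (2 * (R + j + 1)))
            * (thetaCoeff b r / (qPoch b b (R + j + 1 - r) * qPoch b b (R + j + 1 + r)))
          - thetaCoeff b r / (qPoch b b (R + j - r) * qPoch b b (R + j + r)))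
      = -thetaCoeff b (R + 1) * b ^ j / (qPoch b b j * qPoch b b (2 * R + j + 1)) := by
  have hne := qPoch_self_ne_zero hb
  have hfactor (n : ℕ) : 1 - b * b ^ n ≠ 0 :=
    right_ne_zero_of_mul (qPoch_succ b b n ▸ hne (n + 1))
  induction R generalizing j with
  | zero =>
    have hj := hne j
    have hj' := hfactor j
    simp only [zero_add, Finset.sum_range_one, thetaCoeff, if_true, one_ne_zero, if_false,
      Nat.sub_zero, add_zero, mul_zero, qPoch_succ]
    field_simp
    ring
  | succ R ih =>
    have hj := hne j
    have hj' := hfactor j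
    have hRj := hne (2 * R + j + 2)
    have hRj' := hfactor (2 * R + j + 2)
    have hsub : R + (j + 1) - (R + 1) = j := by omega
    have hsub' : R + (j + 1) + 1 - (R + 1) = j + 1 := by omega
    have hadd : R + (j + 1) + (R + 1) = 2 * R + j + 2 := by ring
    have hadd' : R + (j + 1) + 1 + (R + 1) = 2 * R + j + 2 + 1 := by ring
    have hprev : 2 * R + (j + 1) + 1 = 2 * R + j + 2 := by ring
    have hindex : 2 * (R + 1) + j + 1 = 2 * R + j + 2 + 1 := by ring
    rw [add_assoc R 1 j, add_comm 1 j, Finset.sum_range_succ, ih, hsub, hsub', hadd, hadd', hprev,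
      hindex, qPoch_succ b b j, qPoch_succ b b (2 * R + j + 2), thetaCoeff_add_two]
    field_simp
    ring

lemma sum_thetaCoeff_div_succ (hb : ‖b‖ < 1) (n : ℕ) :
    (1 - b ^ (2 * (n + 1))) * ∑ r ∈ Finset.range (n + 2),
        thetaCoeff b r / (qPoch b b (n + 1 - r) * qPoch b b (n + 1 + r))
      = ∑ r ∈ Finset.range (n + 1), thetaCoeff b r / (qPoch b b (n - r) * qPoch b b (n + r)) := by
  have hpartial := sum_range_thetaCoeff_sub hb n 0
  have hlast := qPoch_self_ne_zero hb (2 * n + 2)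
  rw [qPoch_succ, ← pow_succ'] at hlast
  have hn := left_ne_zero_of_mul hlast
  have hn' := right_ne_zero_of_mul hlast
  rw [Finset.sum_sub_distrib, ← Finset.mul_sum, sub_eq_iff_eq_add'] at hpartial
  simp only [add_zero, pow_zero, mul_one, qPoch_zero, one_mul] at hpartial
  rw [Finset.sum_range_succ, mul_add, hpartial, Nat.sub_self, qPoch_zero, one_mul,
    show n + 1 + (n + 1) = 2 * n + 1 + 1 by ring,
    qPoch_succ b b (2 * n + 1), ← pow_succ']
  field_simp
  ring

theorem isBaileyPair_thetaCoeff (hb : ‖b‖ < 1) :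
    IsBaileyPair 1 b (thetaCoeff b) fun n ↦ (qPoch (b ^ 2) (b ^ 2) n)⁻¹ := by
  have hb2 := norm_pow_lt_one hb two_ne_zero
  intro n
  simp only [one_mul]
  induction n with
  | zero => simp [thetaCoeff]
  | succ n ih =>
    have hne := right_ne_zero_of_mul (qPoch_succ _ _ n ▸ qPoch_self_ne_zero hb2 (n + 1))
    rw [← pow_succ', ← pow_mul] at hne
    rw [qPoch_succ, mul_inv, ih, ← pow_succ', ← pow_mul, mul_inv_eq_iff_eq_mul₀ hne, mul_comm,
      sum_thetaCoeff_div_succ hb]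

theorem tsum_thetaCoeff (hb : ‖b‖ < 1) :
    ∑' r, thetaCoeff b r = qPochInf b (b ^ 2) ^ 2 * qPochInf (b ^ 2) (b ^ 2) := by
  have hb2 := norm_pow_lt_one hb two_ne_zero
  have hbb := qPoch_self_ne_zero hb
  have hinf := qPochInf_ne_zero hb hbb
  have hinf2 := qPochInf_ne_zero hb2 (qPoch_self_ne_zero hb2)
  have hlim := (isBaileyPair_thetaCoeff hb).tendsto hb (by simpa using hbb)
    (summable_thetaCoeff hb)
  have hvalue := tendsto_nhds_unique hlim ((tendsto_qPoch (b ^ 2) hb2).inv₀ hinf2)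
  have hsplit := qPochInf_sq_mul_qPochInf_sq b hb
  rw [← pow_two] at hsplit
  rw [one_mul, div_eq_iff (mul_ne_zero hinf hinf)] at hvalue
  rw [hvalue, ← hsplit]
  field_simp

end Theta

/-- Identity (33) (Slater (25)): for `|q| < 1`,
`Σ_{n≥0} q^{n^2} (-q;q^2)_n / (q^4;q^4)_n
  = ((-q;q^2)_∞/(q^2;q^2)_∞) (q^3;q^6)_∞^2 (q^6;q^6)_∞`. -/
theorem rr_33 (q : ℂ) (hq : ‖q‖ < 1) :
    ∑' n : ℕ, q ^ (n ^ 2) * qPoch (-q) (q ^ 2) n / qPoch (q ^ 4) (q ^ 4) n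
      = qPochInf (-q) (q ^ 2) / qPochInf (q ^ 2) (q ^ 2) *
          (qPochInf (q ^ 3) (q ^ 6) ^ 2 * qPochInf (q ^ 6) (q ^ 6)) := by
  have hb2 := norm_pow_lt_one hq two_ne_zero
  have hb3 := norm_pow_lt_one hq three_ne_zero
  have hcoeff (r : ℕ) : qWeight (-q) (q ^ 2) r * thetaCoeff (q ^ 2) r = thetaCoeff (q ^ 3) r := by
    rw [qWeight_neg_sq, pow_sq_mul_thetaCoeff_pow]
  have hsummable : Summable fun r ↦ qWeight (-q) (q ^ 2) r * thetaCoeff (q ^ 2) r := by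
    simpa only [hcoeff] using summable_thetaCoeff hb3
  have hρσ : -q * -q = 1 * q ^ 2 := by ring
  have hne : ∀ n, qPoch (1 * q ^ 2) (q ^ 2) n ≠ 0 := by simpa using qPoch_self_ne_zero hb2
  calc ∑' n : ℕ, q ^ (n ^ 2) * qPoch (-q) (q ^ 2) n / qPoch (q ^ 4) (q ^ 4) n
      = ∑' n, qPoch (-q) (q ^ 2) n * qWeight (-q) (q ^ 2) n
          * (qPoch ((q ^ 2) ^ 2) ((q ^ 2) ^ 2) n)⁻¹ := by
        simp only [qWeight_neg_sq, ← pow_mul, div_eq_mul_inv, mul_comm (q ^ _)]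
    _ = (∑' r, qPochInf (-q) (q ^ 2) * thetaCoeff (q ^ 3) r) / qPochInf (q ^ 2) (q ^ 2) := by
        rw [(isBaileyPair_thetaCoeff hb2).tsum_eq hb2 hρσ hne hsummable]
        simp only [hcoeff, qPoch_mul_qPochInf _ hb2, one_mul]
    _ = _ := by
        rw [tsum_mul_left, tsum_thetaCoeff hb3, ← pow_mul, mul_div_right_comm]
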